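/- Every finite-dimensional n-Lie module over the vector products n-Lie algebra V_n (n ≥ 2) over ℂ is completely reducible. -/

import Mathlib

/-!
In a finite-dimensional representation over a field of characteristic zero, an element `x` of an
`𝔰𝔬₃`-triple satisfies `-4 tr x² ∈ ℕ`, with value zero only if `x` acts as zero: over the algebraic
closure `2ix` is the semisimple element of an `𝔰𝔩₂`-triple, whose eigenvalues are integers. So if a
Casimir element `∑ x_b²` built from such elements acts nilpotently, the whole module is trivial.
Hence the kernel of the Casimir operator is exactly the space of invariants, and it is complementary
to the image. Passage to invariants is therefore exact, and applying this to
`Hom(V, N) → Hom(N, N)` produces an invariant projection onto a submodule `N`.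

For the vector product, `w ⬝ᵥ ω v = -det (w, v)`. Consequently `ω (u, ·)` is skew for the standard
bilinear form, which makes the Casimir tensor of the standard frames invariant, and the cofactor
formula yields an `𝔰𝔬₃`-triple from every permutation of the standard basis, even or odd.
-/

section

open Module TensorProduct

attribute [local instance] LieRing.ofAssociativeRing

/-- Generators of a copy of `𝔰𝔬₃` (with the cross product relations of `R³`) in a Lie ring; the
zero triple is allowed. -/
structure IsSo3Triple {L : Type*} [LieRing L] (x y z : L) : Prop where
  lie_x_y : ⁅x, y⁆ = z
  lie_y_z : ⁅y, z⁆ = x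
  lie_z_x : ⁅z, x⁆ = y

lemma IsSo3Triple.map {R L L' : Type*} [CommRing R] [LieRing L] [LieAlgebra R L] [LieRing L']
    [LieAlgebra R L'] {x y z : L} (t : IsSo3Triple x y z) (φ : L →ₗ⁅R⁆ L') :
    IsSo3Triple (φ x) (φ y) (φ z) where
  lie_x_y := by rw [← LieHom.map_lie, t.lie_x_y]
  lie_y_z := by rw [← LieHom.map_lie, t.lie_y_z]
  lie_z_x := by rw [← LieHom.map_lie, t.lie_z_x]

lemma IsSo3Triple.isSl2Triple {K L : Type*} [Field K] [CharZero K] [LieRing L] [LieAlgebra K L]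
    {x y z : L} (t : IsSo3Triple x y z) (hx : x ≠ 0) {i : K} (hi : i * i = -1) :
    IsSl2Triple ((2 * i) • x) (y + i • z) (-(y - i • z)) := by
  have lie_x_z : ⁅x, z⁆ = -y := by rw [← lie_skew, t.lie_z_x]
  have lie_z_y : ⁅z, y⁆ = -x := by rw [← lie_skew, t.lie_y_z]
  have hi0 : i ≠ 0 := by rintro rfl; simp at hi
  refine ⟨by simp [hx, hi0], ?_, ?_, ?_⟩
  · simp only [lie_neg, add_lie, lie_sub, smul_lie, lie_smul, lie_self, t.lie_y_z, lie_z_y]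
    module
  · simp only [lie_add, smul_lie, lie_smul, t.lie_x_y, lie_x_z]
    linear_combination (norm := module) (-2 * hi) • y
  · simp only [lie_neg, lie_sub, smul_lie, lie_smul, t.lie_x_y, lie_x_z]
    linear_combination (norm := module) (-2 * hi) • y

lemma exists_int_eq_of_isSl2Triple_of_hasEigenvalue {K L V : Type*} [Field K] [CharZero K]
    [LieRing L] [LieAlgebra K L] [AddCommGroup V] [Module K V] [FiniteDimensional K V]
    [LieRingModule L V] [LieModule K L V] {h e f : L} (t : IsSl2Triple h e f) {μ : K}
    (hμ : (LieModule.toEnd K L V h).HasEigenvalue μ) : ∃ z : ℤ, μ = z := by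
  obtain ⟨v, hv⟩ := hμ.exists_hasEigenvector
  set e' := LieModule.toEnd K L V e
  have lie_h (n : ℕ) : ⁅h, (e' ^ n) v⁆ = (μ + 2 * n) • (e' ^ n) v :=
    t.lie_h_pow_toEnd_e hv.apply_eq_smul n
  have exists_eq_zero : ∃ n, (e' ^ n) v = 0 := by
    by_contra! hne
    have finite_range : (Set.range fun n : ℕ ↦ μ + 2 * (n : K)).Finite :=
      (LieModule.toEnd K L V h).finite_hasEigenvalue.subset <| Set.range_subset_iff.mpr fun n ↦
        End.hasEigenvalue_of_hasEigenvector ⟨End.mem_eigenspace_iff.mpr (lie_h n), hne n⟩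
    exact Set.infinite_range_of_injective (fun a b hab ↦ by simpa using hab) finite_range
  obtain ⟨n, hn, hn'⟩ := Nat.exists_not_and_succ_of_not_zero_of_exists
    (p := fun n ↦ (e' ^ n) v = 0) hv.2 exists_eq_zero
  have primitive : t.HasPrimitiveVectorWith ((e' ^ n) v) (μ + 2 * n) :=
    ⟨hn, lie_h n, by rw [IsSl2Triple.lie_e_pow_toEnd_e, hn']⟩
  obtain ⟨k, hk⟩ := primitive.exists_nat
  exact ⟨k - 2 * n, by push_cast; rw [← hk]; ring⟩

lemma not_isNilpotent_of_isSl2Triple {K V : Type*} [Field K] [CharZero K] [AddCommGroup V]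
    [Module K V] {h e f : End K V} (t : IsSl2Triple h e f) : ¬ IsNilpotent h := by
  intro hh
  have hev : (LieAlgebra.ad K (End K V) h).HasEigenvalue 2 :=
    End.hasEigenvalue_of_hasEigenvector
      ⟨End.mem_eigenspace_iff.mpr (t.lie_h_e_smul K), t.e_ne_zero⟩
  have := hev.isNilpotent_of_isNilpotent (LieAlgebra.ad_nilpotent_of_nilpotent hh)
  simp at this

lemma exists_nat_trace_eq_of_hasEigenvalue {K V : Type*} [Field K] [IsAlgClosed K]
    [AddCommGroup V] [Module K V] [FiniteDimensional K V] {f : End K V}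
    (hf : ∀ μ, f.HasEigenvalue μ → ∃ n : ℕ, (n : K) = μ) :
    ∃ n : ℕ, LinearMap.trace K V f = n ∧ (n = 0 → IsNilpotent f) := by
  have splits : f.charpoly.Splits := IsAlgClosed.splits _
  choose! n hn using hf
  obtain ⟨m, hm⟩ : ∃ m : Multiset ℕ, m.map (Nat.cast : ℕ → K) = f.charpoly.roots := by
    refine ⟨f.charpoly.roots.map n, ?_⟩
    rw [Multiset.map_map, Multiset.map_congr rfl fun μ hμ ↦ ?_, Multiset.map_id]
    exact hn μ (f.hasEigenvalue_iff_isRoot_charpoly μ |>.mpr (Polynomial.isRoot_of_mem_roots hμ))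
  refine ⟨m.sum, ?_, fun hsum ↦ ?_⟩
  · rw [End.trace_eq_sum_roots_charpoly_of_splits splits, ← hm]
    exact (map_multiset_sum (Nat.castRingHom K) m).symm
  · have roots_eq : f.charpoly.roots = Multiset.replicate (finrank K V) 0 := by
      refine Multiset.eq_replicate.mpr ⟨?_, fun μ hμ ↦ ?_⟩
      · rw [← splits.natDegree_eq_card_roots, LinearMap.charpoly_natDegree]
      · obtain ⟨k, hk, rfl⟩ := Multiset.mem_map.mp (hm ▸ hμ)
        rw [Multiset.sum_eq_zero_iff.mp hsum k hk, Nat.cast_zero]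
    rw [LinearMap.isNilpotent_iff_charpoly,
      splits.eq_prod_roots_of_monic (LinearMap.charpoly_monic f), roots_eq]
    simp

lemma IsSo3Triple.exists_nat_trace_of_isAlgClosed {K V : Type*} [Field K] [CharZero K]
    [IsAlgClosed K] [AddCommGroup V] [Module K V] [FiniteDimensional K V] {x y z : End K V}
    (t : IsSo3Triple x y z) :
    ∃ n : ℕ, -4 * LinearMap.trace K V (x ^ 2) = n ∧ (n = 0 → x = 0) := by
  rcases eq_or_ne x 0 with rfl | hx
  · exact ⟨0, by simp⟩
  obtain ⟨i, hi⟩ := IsAlgClosed.exists_eq_mul_self (-1 : K)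
  have tsl2 := t.isSl2Triple hx hi.symm
  set h := (2 * i) • x with h_def
  have eigenvalue_sq (μ : K) (hμ : (h ^ 2).HasEigenvalue μ) : ∃ n : ℕ, (n : K) = μ := by
    have : Nontrivial (End K V) := ⟨x, 0, hx⟩
    rw [End.hasEigenvalue_iff_mem_spectrum, spectrum.map_pow_of_pos _ two_pos] at hμ
    obtain ⟨ν, hν, rfl⟩ := hμ
    obtain ⟨k, rfl⟩ := exists_int_eq_of_isSl2Triple_of_hasEigenvalue tsl2 (V := V)
      (End.hasEigenvalue_iff_mem_spectrum.mpr hν)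
    refine ⟨k.natAbs ^ 2, ?_⟩
    change ((k.natAbs ^ 2 : ℕ) : K) = (k : K) ^ 2
    rw [Nat.cast_pow, ← Int.cast_natCast, ← Int.cast_pow, Int.natAbs_sq, Int.cast_pow]
  obtain ⟨n, hn, h_nilp⟩ := exists_nat_trace_eq_of_hasEigenvalue eigenvalue_sq
  refine ⟨n, ?_, fun hn0 ↦ absurd (h_nilp hn0).of_pow (not_isNilpotent_of_isSl2Triple tsl2)⟩
  rw [← hn, h_def, smul_pow, map_smul, smul_eq_mul]
  linear_combination (4 * LinearMap.trace K V (x ^ 2)) * hi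

lemma IsSo3Triple.exists_nat_trace {K V : Type*} [Field K] [CharZero K] [AddCommGroup V]
    [Module K V] [FiniteDimensional K V] {x y z : End K V} (t : IsSo3Triple x y z) :
    ∃ n : ℕ, -4 * LinearMap.trace K V (x ^ 2) = n ∧ (n = 0 → x = 0) := by
  let φ := End.baseChangeHom (R := K) (A := AlgebraicClosure K) (M := V)
  obtain ⟨n, hn, hx⟩ := (t.map φ.toLieHom).exists_nat_trace_of_isAlgClosed
  refine ⟨n, ?_, fun hn0 ↦ ?_⟩
  · apply FaithfulSMul.algebraMap_injective K (AlgebraicClosure K)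
    rw [map_mul, map_neg, map_ofNat, map_natCast, ← LinearMap.trace_baseChange,
      LinearMap.baseChange_pow]
    exact hn
  · apply LinearMap.baseChangeHom_injective K V (AlgebraicClosure K)
    exact (hx hn0).trans (map_zero _).symm

/-- A finite spanning family of a Lie algebra whose Casimir tensor `∑ b, x b ⊗ x b` is invariant
and each of whose members is part of an `𝔰𝔬₃`-triple. -/
structure IsSo3CasimirFamily (R : Type*) {L ι : Type*} [CommRing R] [LieRing L] [LieAlgebra R L]
    [Fintype ι] (x : ι → L) : Prop where
  span_range : Submodule.span R (Set.range x) = ⊤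
  lie_sum_tmul_self : ∀ y : L, ⁅y, ∑ b, x b ⊗ₜ[R] x b⁆ = 0
  exists_isSo3Triple : ∀ a, ∃ y z, IsSo3Triple (x a) y z

/-- The action on `V` of the Casimir element `∑ b, x b ^ 2` attached to a finite family `x` in a
Lie algebra. -/
def casimir (R V : Type*) {L ι : Type*} [CommRing R] [LieRing L] [LieAlgebra R L] [AddCommGroup V]
    [Module R V] [LieRingModule L V] [LieModule R L V] [Fintype ι] (x : ι → L) : End R V :=
  ∑ b, LieModule.toEnd R L V (x b) ^ 2

section CommRing

variable {R L ι V V' : Type*} [CommRing R] [LieRing L] [LieAlgebra R L] [Fintype ι] {x : ι → L}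
  [AddCommGroup V] [Module R V] [LieRingModule L V] [LieModule R L V]
  [AddCommGroup V'] [Module R V'] [LieRingModule L V'] [LieModule R L V']

lemma casimir_apply (v : V) : casimir R V x v = ∑ b, ⁅x b, ⁅x b, v⁆⁆ := by
  simp [casimir, LinearMap.sum_apply, pow_two]

lemma map_casimir (φ : V →ₗ⁅R,L⁆ V') (v : V) :
    φ (casimir R V x v) = casimir R V' x (φ v) := by
  simp only [casimir_apply, map_sum, LieModuleHom.map_lie]

lemma IsSo3CasimirFamily.lie_toEnd_casimir (hx : IsSo3CasimirFamily R x) (y : L) :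
    ⁅LieModule.toEnd R L V y, casimir R V x⁆ = 0 := by
  let mul : L ⊗[R] L →ₗ[R] End R V := LinearMap.mul' R (End R V) ∘ₗ
    TensorProduct.map (LieModule.toEnd R L V : L →ₗ[R] End R V) (LieModule.toEnd R L V)
  have mul_lie : mul ⁅y, ∑ b, x b ⊗ₜ[R] x b⁆ = ⁅LieModule.toEnd R L V y, casimir R V x⁆ := by
    simp only [casimir, lie_sum, TensorProduct.LieModule.lie_tmul_right, map_sum, map_add, mul,
      LinearMap.comp_apply, TensorProduct.map_tmul, LinearMap.mul'_apply, LieHom.coe_toLinearMap,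
      LieHom.map_lie, LieRing.of_associative_ring_bracket]
    rw [Finset.mul_sum, Finset.sum_mul, ← Finset.sum_sub_distrib]
    refine Finset.sum_congr rfl fun b _ ↦ ?_
    noncomm_ring
  rw [← mul_lie, hx.lie_sum_tmul_self, map_zero]

lemma IsSo3CasimirFamily.lie_casimir (hx : IsSo3CasimirFamily R x) (y : L) (v : V) :
    ⁅y, casimir R V x v⁆ = casimir R V x ⁅y, v⁆ :=
  sub_eq_zero.mp (LinearMap.congr_fun (hx.lie_toEnd_casimir y) v)

lemma casimir_eq_zero_of_mem_maxTrivSubmodule {v : V}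
    (hv : v ∈ LieModule.maxTrivSubmodule R L V) : casimir R V x v = 0 := by
  rw [LieModule.mem_maxTrivSubmodule] at hv
  simp [casimir_apply, hv]

end CommRing

section Field

variable {K L ι V V' : Type*} [Field K] [CharZero K] [LieRing L] [LieAlgebra K L] [Fintype ι]
  {x : ι → L}
  [AddCommGroup V] [Module K V] [FiniteDimensional K V] [LieRingModule L V] [LieModule K L V]
  [AddCommGroup V'] [Module K V'] [FiniteDimensional K V'] [LieRingModule L V'] [LieModule K L V']

namespace IsSo3CasimirFamily

/-- The trace of the Casimir operator is a sum of non-positive rationals, one for each `x b`. -/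
lemma isTrivial_of_isNilpotent_casimir (hx : IsSo3CasimirFamily K x)
    (hC : IsNilpotent (casimir K V x)) : LieModule.IsTrivial L V := by
  have trace_sq (b : ι) : ∃ n : ℕ, -4 * LinearMap.trace K V (LieModule.toEnd K L V (x b) ^ 2) = n ∧
      (n = 0 → LieModule.toEnd K L V (x b) = 0) := by
    obtain ⟨y, z, t⟩ := hx.exists_isSo3Triple b
    exact (t.map (LieModule.toEnd K L V)).exists_nat_trace
  choose n hn toEnd_eq_zero using trace_sq
  have sum_eq_zero : ∑ b, n b = 0 := by
    have trace_casimir : LinearMap.trace K V (casimir K V x) = 0 :=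
      (LinearMap.isNilpotent_trace_of_isNilpotent hC).eq_zero
    rw [← Nat.cast_eq_zero (R := K), Nat.cast_sum, ← Finset.sum_congr rfl fun b _ ↦ hn b,
      ← Finset.mul_sum, ← map_sum]
    exact mul_eq_zero_of_right _ trace_casimir
  rw [Finset.sum_eq_zero_iff] at sum_eq_zero
  have toEnd_eq : (LieModule.toEnd K L V : L →ₗ[K] End K V) = 0 :=
    LinearMap.ext_on_range hx.span_range fun b ↦ toEnd_eq_zero b (sum_eq_zero b (Finset.mem_univ b))
  exact ⟨fun y v ↦ LinearMap.congr_fun (LinearMap.congr_fun toEnd_eq y) v⟩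

lemma ker_casimir_sq_le (hx : IsSo3CasimirFamily K x) :
    LinearMap.ker (casimir K V x ^ 2) ≤ LieModule.maxTrivSubmodule K L V := by
  let W : LieSubmodule K L V :=
    { LinearMap.ker (casimir K V x ^ 2) with
      lie_mem := fun {y v} hv ↦ by
        change casimir K V x (casimir K V x ⁅y, v⁆) = 0
        rw [← hx.lie_casimir, ← hx.lie_casimir]
        exact (congrArg _ hv).trans (lie_zero y) }
  have casimir_W (w : W) : (casimir K W x w : V) = casimir K V x w := map_casimir W.incl w
  have nilpotent_W : IsNilpotent (casimir K W x) := by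
    refine ⟨2, LinearMap.ext fun w ↦ Subtype.ext ?_⟩
    rw [pow_two, End.mul_apply, casimir_W, casimir_W]
    exact w.2
  have := hx.isTrivial_of_isNilpotent_casimir nilpotent_W
  exact fun v hv y ↦ congrArg Subtype.val (LieModule.IsTrivial.trivial y (⟨v, hv⟩ : W))

lemma ker_casimir (hx : IsSo3CasimirFamily K x) :
    LinearMap.ker (casimir K V x) = LieModule.maxTrivSubmodule K L V := by
  refine le_antisymm (le_trans (fun v hv ↦ ?_) hx.ker_casimir_sq_le)
    fun v hv ↦ casimir_eq_zero_of_mem_maxTrivSubmodule hv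
  exact (congrArg (casimir K V x) hv).trans (map_zero _)

lemma disjoint_maxTrivSubmodule_range_casimir (hx : IsSo3CasimirFamily K x) :
    Disjoint (LieModule.maxTrivSubmodule K L V : Submodule K V)
      (LinearMap.range (casimir K V x)) := by
  rw [Submodule.disjoint_def]
  rintro _ hv ⟨v, rfl⟩
  exact casimir_eq_zero_of_mem_maxTrivSubmodule
    (hx.ker_casimir_sq_le (casimir_eq_zero_of_mem_maxTrivSubmodule (x := x) hv))

lemma isCompl_maxTrivSubmodule_range_casimir (hx : IsSo3CasimirFamily K x) :
    IsCompl (LieModule.maxTrivSubmodule K L V : Submodule K V)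
      (LinearMap.range (casimir K V x)) := by
  rw [Submodule.isCompl_iff_disjoint _ _ ?_]
  · exact hx.disjoint_maxTrivSubmodule_range_casimir
  · rw [← hx.ker_casimir, add_comm, LinearMap.finrank_range_add_finrank_ker]

lemma maxTrivHom_surjective (hx : IsSo3CasimirFamily K x) {φ : V →ₗ⁅K,L⁆ V'}
    (hφ : Function.Surjective φ) : Function.Surjective (LieModule.maxTrivHom φ) := by
  rintro ⟨w, hw⟩
  obtain ⟨u, rfl⟩ := hφ w
  obtain ⟨v, hv, _, ⟨t, rfl⟩, rfl⟩ := Submodule.mem_sup.mp <|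
    (hx.isCompl_maxTrivSubmodule_range_casimir (V := V)).sup_eq_top.ge (Submodule.mem_top (x := u))
  refine ⟨⟨v, hv⟩, Subtype.ext ?_⟩
  have casimir_inv : casimir K V' x (φ t) ∈ LieModule.maxTrivSubmodule K L V' := by
    rw [← map_casimir]
    have := sub_mem hw (LieModule.maxTrivHom φ ⟨v, hv⟩).2
    rwa [map_add, LieModule.coe_maxTrivHom_apply, add_sub_cancel_left] at this
  have casimir_zero : casimir K V' x (φ t) = 0 :=
    Submodule.disjoint_def.mp hx.disjoint_maxTrivSubmodule_range_casimir _ casimir_inv ⟨φ t, rfl⟩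
  change φ v = φ (v + casimir K V x t)
  rw [map_add, map_casimir, casimir_zero, add_zero]

lemma exists_lieModuleHom_retraction (hx : IsSo3CasimirFamily K x) (N : LieSubmodule K L V) :
    ∃ π : V →ₗ⁅K,L⁆ N, ∀ m : N, π m = m := by
  let restrict : (V →ₗ[K] N) →ₗ⁅K,L⁆ (N →ₗ[K] N) :=
    { LinearMap.lcomp K N (N : Submodule K V).subtype with
      map_lie' := fun {y f} ↦ LinearMap.ext fun m ↦ rfl }
  have surjective : Function.Surjective restrict := fun g ↦
    let ⟨f, hf⟩ := g.exists_extend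
    ⟨f, hf⟩
  obtain ⟨f, hf⟩ := hx.maxTrivHom_surjective surjective
    (LieModule.maxTrivLinearMapEquivLieModuleHom.symm LieModuleHom.id)
  exact ⟨LieModule.maxTrivLinearMapEquivLieModuleHom f, fun m ↦
    LinearMap.congr_fun (congrArg Subtype.val hf) m⟩

theorem complementedLattice (hx : IsSo3CasimirFamily K x) :
    ComplementedLattice (LieSubmodule K L V) where
  exists_isCompl N := by
    obtain ⟨π, hπ⟩ := hx.exists_lieModuleHom_retraction N
    refine ⟨π.ker, LieSubmodule.isCompl_toSubmodule.mp ?_⟩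
    exact LinearMap.isCompl_of_proj (f := (π : V →ₗ[K] N)) hπ

end IsSo3CasimirFamily

end Field

lemma sum_sum_update_comm {ι κ N : Type*} [Fintype ι] [DecidableEq ι] [Fintype κ]
    [AddCommMonoid N] (G : (ι → κ) → (ι → κ) → N) (i : ι) :
    ∑ b, ∑ k, G (Function.update b i k) b = ∑ b, ∑ k, G b (Function.update b i k) := by
  simp only [← Fintype.sum_prod_type']
  let exchange : (ι → κ) × κ → (ι → κ) × κ := fun q ↦ (Function.update q.1 i q.2, q.1 i)
  have exchange_involutive : Function.Involutive exchange := fun q ↦ by simp [exchange]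
  refine Fintype.sum_equiv exchange_involutive.toPerm _ _ fun q ↦ ?_
  simp [exchange]

/-- The family of standard basis vectors of `κ → R` with indices `a`. -/
def coordFrame (R : Type*) [CommRing R] {ι κ : Type*} [DecidableEq κ] (a : ι → κ) : ι → κ → R :=
  (fun k ↦ Pi.single k 1) ∘ a

/-- `ω` is the vector product of `n` vectors in `R^(n+1)`: the bracket of the `n`-Lie algebra
`V_n`, with basis vectors indexed from `0`. -/
def IsVectorProduct {R : Type*} [CommRing R] {n : ℕ}
    (ω : (Fin (n + 1) → R) [⋀^Fin n]→ₗ[R] (Fin (n + 1) → R)) : Prop :=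
  ∀ i : Fin (n + 1), ω (coordFrame R i.succAbove) = (-1 : R) ^ ((i : ℕ) + 1) • Pi.single i 1

section VectorProduct

variable {R N : Type*} [CommRing R] [AddCommGroup N] [Module R N] {n : ℕ}

lemma span_range_coordFrame {ι κ : Type*} [Finite ι] [Finite κ] [DecidableEq κ]
    (f : (κ → R) [⋀^ι]→ₗ[R] N) :
    Submodule.span R (Set.range fun a : ι → κ ↦ f (coordFrame R a)) =
      Submodule.span R (Set.range f) := by
  set P := Submodule.span R (Set.range fun a : ι → κ ↦ f (coordFrame R a))
  refine le_antisymm (Submodule.span_mono (Set.range_comp_subset_range _ f))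
    (Submodule.span_le.mpr (Set.range_subset_iff.mpr fun u ↦ ?_))
  have mkQ_eq_zero : P.mkQ.compAlternatingMap f = 0 :=
    Basis.ext_alternating (Pi.basisFun R κ) fun a _ ↦
      (Submodule.Quotient.mk_eq_zero P).mpr <| Submodule.subset_span ⟨a, by
        simp only [coordFrame, Pi.basisFun_apply]; rfl⟩
  exact (Submodule.Quotient.mk_eq_zero P).mp (DFunLike.congr_fun mkQ_eq_zero u)

lemma alternatingMap_ext_succAbove {f g : (Fin (n + 1) → R) [⋀^Fin n]→ₗ[R] N}
    (h : ∀ i : Fin (n + 1), f (coordFrame R i.succAbove) = g (coordFrame R i.succAbove)) :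
    f = g := by
  refine Basis.ext_alternating (Pi.basisFun R (Fin (n + 1))) fun v hv ↦ ?_
  obtain ⟨i, hi⟩ : ∃ i, ∀ r, v r ≠ i := by
    by_contra! hsurj
    simpa using Fintype.card_le_of_surjective v hsurj
  choose τ hτ using fun r ↦ Fin.exists_succAbove_eq (hi r)
  have τ_injective : Function.Injective τ := fun r s hrs ↦ hv (by rw [← hτ r, ← hτ s, hrs])
  let σ := Equiv.ofBijective τ (Finite.injective_iff_bijective.mp τ_injective)
  have frame_eq : (fun r ↦ Pi.basisFun R (Fin (n + 1)) (v r)) = coordFrame R i.succAbove ∘ σ := by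
    ext1 r
    simp [coordFrame, σ, hτ]
  rw [frame_eq, AlternatingMap.map_perm, AlternatingMap.map_perm, h]

lemma detRowAlternating_vecCons_succAbove (w : Fin (n + 1) → R) (i : Fin (n + 1)) :
    Matrix.detRowAlternating (Matrix.vecCons w (coordFrame R i.succAbove)) =
      (-1) ^ (i : ℕ) * w i := by
  refine (Matrix.det_succ_row_zero _).trans ?_
  rw [Finset.sum_eq_single i]
  · have minor_eq_one : Matrix.submatrix (Matrix.vecCons w (coordFrame R i.succAbove))
        Fin.succ i.succAbove = (1 : Matrix (Fin n) (Fin n) R) := by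
      ext r t
      simp [coordFrame, Matrix.submatrix, Matrix.one_apply, Pi.single_apply, eq_comm]
    rw [minor_eq_one]
    simp
  · intro j _ hji
    obtain ⟨r, rfl⟩ := Fin.exists_succAbove_eq hji
    rw [Matrix.det_eq_zero_of_row_eq_zero r fun t ↦ ?_, mul_zero]
    simp [coordFrame, Matrix.submatrix]
  · simp

lemma detRowAlternating_coordFrame (s : Equiv.Perm (Fin n)) :
    Matrix.detRowAlternating (coordFrame R s) = Equiv.Perm.sign s • 1 := by
  have frame_id : Matrix.detRowAlternating (coordFrame R (id : Fin n → Fin n)) = 1 := by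
    refine Eq.trans (congrArg Matrix.det ?_) Matrix.det_one
    ext i j
    simp [coordFrame, Matrix.one_apply, Pi.single_apply, eq_comm]
  rw [← frame_id, ← AlternatingMap.map_perm]
  rfl

namespace IsVectorProduct

variable {ω : (Fin (n + 1) → R) [⋀^Fin n]→ₗ[R] (Fin (n + 1) → R)}

lemma dotProduct_apply (hω : IsVectorProduct ω) (w : Fin (n + 1) → R)
    (v : Fin n → Fin (n + 1) → R) :
    w ⬝ᵥ ω v = -Matrix.detRowAlternating (Matrix.vecCons w v) := by
  have : (dotProductBilin R R w).compAlternatingMap ω =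
      -(Matrix.detRowAlternating (n := Fin (n + 1))).curryLeft w := by
    refine alternatingMap_ext_succAbove fun i ↦ ?_
    change w ⬝ᵥ ω _ = -Matrix.detRowAlternating (Matrix.vecCons w _)
    rw [hω i, detRowAlternating_vecCons_succAbove, dotProduct_smul, dotProduct_single_one,
      pow_succ, smul_eq_mul]
    ring
  exact DFunLike.congr_fun this v

lemma dotProduct_snoc {ω : (Fin (n + 2) → R) [⋀^Fin (n + 1)]→ₗ[R] (Fin (n + 2) → R)}
    (hω : IsVectorProduct ω) (u : Fin n → Fin (n + 2) → R) (v w : Fin (n + 2) → R) :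
    v ⬝ᵥ ω (Fin.snoc u w) = -(w ⬝ᵥ ω (Fin.snoc u v)) := by
  have swap_eq : Matrix.vecCons v (Fin.snoc u w) ∘ Equiv.swap 0 (Fin.last (n + 1)) =
      Matrix.vecCons w (Fin.snoc u v) := by
    rw [Equiv.comp_swap_eq_update]
    simp only [Matrix.vecCons, Fin.cons_zero, Fin.cons_snoc_eq_snoc_cons, Fin.snoc_last,
      Fin.update_snoc_last]
    rw [← Fin.cons_snoc_eq_snoc_cons, ← Fin.cons_snoc_eq_snoc_cons, Fin.update_cons_zero]
  rw [hω.dotProduct_apply, hω.dotProduct_apply, ← swap_eq,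
    AlternatingMap.map_swap _ _ Fin.last_pos.ne, neg_neg]

lemma apply_coordFrame (hω : IsVectorProduct ω) (s : Equiv.Perm (Fin (n + 1))) :
    ω (coordFrame R (s ∘ Fin.succ)) = -(Equiv.Perm.sign s • Pi.single (s 0) 1) := by
  ext m
  obtain ⟨t, rfl⟩ := s.surjective m
  rw [← single_one_dotProduct (s t) (ω _), hω.dotProduct_apply]
  refine t.cases ?_ fun r ↦ ?_
  · have frame_eq : Matrix.vecCons (Pi.single (s 0) 1) (coordFrame R (s ∘ Fin.succ)) =
        coordFrame R s := by
      ext1 r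
      refine r.cases rfl fun r ↦ rfl
    rw [frame_eq, detRowAlternating_coordFrame]
    simp
  · rw [AlternatingMap.map_eq_zero_of_eq _ _ (i := 0) (j := r.succ) rfl (Fin.succ_ne_zero r).symm]
    simp

end IsVectorProduct

lemma update_coordFrame {ι κ : Type*} [DecidableEq ι] [DecidableEq κ] (a : ι → κ) (i : ι) (k : κ) :
    Function.update (coordFrame R a) i (Pi.single k 1) = coordFrame R (Function.update a i k) :=
  (Function.comp_update _ a i k).symm

lemma IsVectorProduct.apply_update_coordFrame
    {ω : (Fin (n + 1) → R) [⋀^Fin n]→ₗ[R] (Fin (n + 1) → R)}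
    (hω : IsVectorProduct ω) (s : Equiv.Perm (Fin (n + 1))) (r : Fin n) :
    ω (Function.update (coordFrame R (s ∘ Fin.succ)) r (ω (coordFrame R (s ∘ Fin.succ)))) =
      -coordFrame R (s ∘ Fin.succ) r := by
  have exchange : Function.update (s ∘ Fin.succ) r (s 0) =
      (s * Equiv.swap 0 r.succ : Equiv.Perm _) ∘ Fin.succ := by
    ext1 t
    rcases eq_or_ne t r with rfl | htr
    · simp
    · simp [htr, Equiv.swap_apply_of_ne_of_ne (Fin.succ_ne_zero t)]
  have exchanged : ω (coordFrame R (Function.update (s ∘ Fin.succ) r (s 0))) =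
      Equiv.Perm.sign s • coordFrame R (s ∘ Fin.succ) r := by
    rw [exchange, hω.apply_coordFrame, Equiv.Perm.sign_mul,
      Equiv.Perm.sign_swap (Fin.succ_ne_zero r).symm]
    simp [coordFrame]
  rcases Int.units_eq_one_or (Equiv.Perm.sign s) with hs | hs <;>
    simp [hω.apply_coordFrame, update_coordFrame, exchanged, hs]

end VectorProduct

/-- `Ψ` turns the bracket of decomposable wedges `u₀ ∧ ⋯ ∧ u_p` in the basic Lie algebra of the
`(p + 2)`-Lie algebra with bracket `ω` into the Lie bracket of `L`. -/
def RespectsBasicBracket {R E L : Type*} [CommRing R] [AddCommGroup E] [Module R E] [LieRing L]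
    [LieAlgebra R L] {p : ℕ} (ω : E [⋀^Fin (p + 2)]→ₗ[R] E) (Ψ : E [⋀^Fin (p + 1)]→ₗ[R] L) : Prop :=
  ∀ a b : Fin (p + 1) → E, ⁅Ψ a, Ψ b⁆ =
    ∑ i : Fin (p + 1), (-1 : R) ^ (i : ℕ) •
      Ψ (Fin.cons (ω (Fin.snoc a (b i))) fun r ↦ b (i.succAbove r))

namespace RespectsBasicBracket

section General

variable {R E L : Type*} [CommRing R] [AddCommGroup E] [Module R E] [LieRing L]
  [LieAlgebra R L] {p : ℕ} {ω : E [⋀^Fin (p + 2)]→ₗ[R] E} {Ψ : E [⋀^Fin (p + 1)]→ₗ[R] L}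

lemma lie_eq_sum_update (hΨ : RespectsBasicBracket ω Ψ) (a b : Fin (p + 1) → E) :
    ⁅Ψ a, Ψ b⁆ = ∑ i, Ψ (Function.update b i (ω (Fin.snoc a (b i)))) := by
  rw [hΨ a b]
  refine Finset.sum_congr rfl fun i _ ↦ ?_
  rw [← Fin.insertNth_removeNth, AlternatingMap.map_insertNth, ← Int.cast_smul_eq_zsmul R]
  push_cast
  rfl

lemma lie_update (hΨ : RespectsBasicBracket ω Ψ) (u : Fin (p + 1) → E) (i : Fin (p + 1)) (w : E) :
    ⁅Ψ u, Ψ (Function.update u i w)⁆ = Ψ (Function.update u i (ω (Fin.snoc u w))) := by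
  rw [hΨ.lie_eq_sum_update, Finset.sum_eq_single i]
  · simp
  · intro j _ hji
    have repeated : ω (Fin.snoc u (Function.update u i w j)) = 0 :=
      ω.map_eq_zero_of_eq _ (i := j.castSucc) (j := Fin.last _) (by simp [hji])
        (Fin.castSucc_lt_last j).ne
    rw [repeated, Ψ.map_update_zero]
  · simp

lemma isSo3Triple (hΨ : RespectsBasicBracket ω Ψ) {v : Fin (p + 2) → E}
    (hv : ∀ r, ω (Function.update v r (ω v)) = -v r) (i : Fin (p + 1)) :
    IsSo3Triple (Ψ (Fin.init v)) (Ψ (Function.update (Fin.init v) i (v (Fin.last _))))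
      (Ψ (Function.update (Fin.init v) i (ω v))) where
  lie_x_y := by rw [hΨ.lie_update, Fin.snoc_init_self]
  lie_z_x := by
    have snoc_eq : Fin.snoc (Fin.init v) (ω v) = Function.update v (Fin.last _) (ω v) := by
      rw [← Fin.update_snoc_last, Fin.snoc_init_self]
    rw [← lie_skew, hΨ.lie_update, snoc_eq, hv, AlternatingMap.map_update_neg, neg_neg]
  lie_y_z := by
    set u := Function.update (Fin.init v) i (v (Fin.last _))
    have snoc_eq : Fin.snoc u (ω v) =
        Function.update v i.castSucc (ω v) ∘ Equiv.swap i.castSucc (Fin.last _) := by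
      refine funext fun j ↦ j.lastCases ?_ fun r ↦ ?_
      · simp
      · rcases eq_or_ne r i with rfl | hri
        · simp [u, (Fin.castSucc_lt_last _).ne']
        · simp [u, hri, Fin.init, Equiv.swap_apply_of_ne_of_ne, (Fin.castSucc_lt_last _).ne]
    have apply_snoc : ω (Fin.snoc u (ω v)) = Fin.init v i := by
      rw [snoc_eq, AlternatingMap.map_swap _ _ (Fin.castSucc_lt_last i).ne, hv, neg_neg]
      rfl
    have update_u (w : E) : Function.update u i w = Function.update (Fin.init v) i w :=
      Function.update_idem ..
    rw [← update_u, hΨ.lie_update, apply_snoc, update_u, Function.update_eq_self]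

lemma lie_mem_span_range (hΨ : RespectsBasicBracket ω Ψ) {x y : L}
    (hx : x ∈ Submodule.span R (Set.range Ψ)) (hy : y ∈ Submodule.span R (Set.range Ψ)) :
    ⁅x, y⁆ ∈ Submodule.span R (Set.range Ψ) := by
  refine LinearMap.BilinMap.apply_apply_mem_of_mem_span _ _ _
    (LieModule.toEnd R L L : L →ₗ[R] L →ₗ[R] L) ?_ _ _ hx hy
  rintro _ ⟨a, rfl⟩ _ ⟨b, rfl⟩
  change ⁅Ψ a, Ψ b⁆ ∈ _
  rw [hΨ.lie_eq_sum_update]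
  exact sum_mem fun i _ ↦ Submodule.subset_span ⟨_, rfl⟩

/-- The Lie subalgebra which is the image of the basic Lie algebra under `Ψ`. -/
def spanRange (hΨ : RespectsBasicBracket ω Ψ) : LieSubalgebra R L :=
  { Submodule.span R (Set.range Ψ) with lie_mem' := hΨ.lie_mem_span_range }

/-- `Ψ` as a map into the Lie subalgebra spanned by its values. -/
def rangeRestrict (hΨ : RespectsBasicBracket ω Ψ) : E [⋀^Fin (p + 1)]→ₗ[R] hΨ.spanRange :=
  Ψ.codRestrict hΨ.spanRange.toSubmodule fun u ↦ Submodule.subset_span ⟨u, rfl⟩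

lemma respectsBasicBracket_rangeRestrict (hΨ : RespectsBasicBracket ω Ψ) :
    RespectsBasicBracket ω hΨ.rangeRestrict := by
  intro a b
  apply Subtype.ext
  refine (hΨ a b).trans (Eq.symm ?_)
  exact map_sum hΨ.spanRange.toSubmodule.subtype
    (fun i : Fin (p + 1) ↦ (-1 : R) ^ (i : ℕ) •
      hΨ.rangeRestrict (Fin.cons (ω (Fin.snoc a (b i))) fun r ↦ b (i.succAbove r))) Finset.univ

lemma span_range_rangeRestrict (hΨ : RespectsBasicBracket ω Ψ) :
    Submodule.span R (Set.range hΨ.rangeRestrict) = ⊤ := by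
  apply Submodule.map_injective_of_injective hΨ.spanRange.toSubmodule.subtype_injective
  refine (Submodule.map_span _ _).trans ?_
  rw [← Set.range_comp, Submodule.map_top, Submodule.range_subtype]
  rfl

lemma exists_invariant_isCompl {M : Type*} [AddCommGroup M] [Module R M]
    {ρ : E [⋀^Fin (p + 1)]→ₗ[R] End R M} (hρ : RespectsBasicBracket ω ρ)
    [ComplementedLattice (LieSubmodule R hρ.spanRange M)] {N : Submodule R M}
    (hN : ∀ u, ∀ x ∈ N, ρ u x ∈ N) :
    ∃ S : Submodule R M, (∀ u, ∀ x ∈ S, ρ u x ∈ S) ∧ IsCompl N S := by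
  have span_le : Submodule.span R (Set.range ρ) ≤ Submodule.compatibleMaps N N :=
    Submodule.span_le.mpr (Set.range_subset_iff.mpr hN)
  let N' : LieSubmodule R hρ.spanRange M :=
    { N with lie_mem := fun {f x} hx ↦ span_le f.2 hx }
  obtain ⟨S, hS⟩ := exists_isCompl N'
  exact ⟨S, fun u x hx ↦ S.lie_mem (x := hρ.rangeRestrict u) hx,
    LieSubmodule.isCompl_toSubmodule.mpr hS⟩

end General

section VectorProduct

variable {R L : Type*} [CommRing R] [LieRing L] [LieAlgebra R L] {p : ℕ}
  {ω : (Fin (p + 3) → R) [⋀^Fin (p + 2)]→ₗ[R] (Fin (p + 3) → R)}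
  {Ψ : (Fin (p + 3) → R) [⋀^Fin (p + 1)]→ₗ[R] L}

lemma lie_apply_coordFrame (hΨ : RespectsBasicBracket ω Ψ) (u : Fin (p + 1) → Fin (p + 3) → R)
    (b : Fin (p + 1) → Fin (p + 3)) :
    ⁅Ψ u, Ψ (coordFrame R b)⁆ = ∑ i, ∑ k, ω (Fin.snoc u (Pi.single (b i) 1)) k •
      Ψ (coordFrame R (Function.update b i k)) := by
  rw [hΨ.lie_eq_sum_update]
  refine Finset.sum_congr rfl fun i _ ↦ ?_
  simp_rw [← update_coordFrame, ← AlternatingMap.map_update_smul, ← AlternatingMap.map_update_sum]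
  rw [← pi_eq_sum_univ']
  rfl

lemma lie_sum_tmul_self (hω : IsVectorProduct ω) (hΨ : RespectsBasicBracket ω Ψ)
    (u : Fin (p + 1) → Fin (p + 3) → R) :
    ⁅Ψ u, ∑ b : Fin (p + 1) → Fin (p + 3), Ψ (coordFrame R b) ⊗ₜ[R] Ψ (coordFrame R b)⁆ = 0 := by
  let A (k l : Fin (p + 3)) : R := ω (Fin.snoc u (Pi.single l 1)) k
  have A_skew (k l : Fin (p + 3)) : A k l = -A l k := by
    simpa using hω.dotProduct_snoc u (Pi.single k 1) (Pi.single l 1)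
  let x (b : Fin (p + 1) → Fin (p + 3)) : L := Ψ (coordFrame R b)
  let G (i : Fin (p + 1)) (c b : Fin (p + 1) → Fin (p + 3)) : L ⊗[R] L :=
    A (c i) (b i) • x c ⊗ₜ x b
  have sum_lie_tmul : ∑ b, ⁅Ψ u, x b⁆ ⊗ₜ[R] x b =
      ∑ i, ∑ b, ∑ k, G i (Function.update b i k) b := by
    rw [Finset.sum_comm]
    simp only [x, hΨ.lie_apply_coordFrame, TensorProduct.sum_tmul, TensorProduct.smul_tmul', G,
      Function.update_self, A]
  have sum_tmul_lie : ∑ b, x b ⊗ₜ[R] ⁅Ψ u, x b⁆ =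
      -∑ i, ∑ b, ∑ k, G i b (Function.update b i k) := by
    rw [Finset.sum_comm]
    simp only [x, hΨ.lie_apply_coordFrame, TensorProduct.tmul_sum, TensorProduct.tmul_smul, G,
      Function.update_self, ← Finset.sum_neg_distrib, ← neg_smul, ← A_skew]
    rfl
  simp_rw [lie_sum, TensorProduct.LieModule.lie_tmul_right, Finset.sum_add_distrib]
  change ∑ b, ⁅Ψ u, x b⁆ ⊗ₜ[R] x b + ∑ b, x b ⊗ₜ[R] ⁅Ψ u, x b⁆ = 0
  rw [sum_lie_tmul, sum_tmul_lie]
  simp_rw [sum_sum_update_comm]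
  exact add_neg_cancel _

lemma exists_isSo3Triple (hω : IsVectorProduct ω) (hΨ : RespectsBasicBracket ω Ψ)
    (a : Fin (p + 1) → Fin (p + 3)) : ∃ y z, IsSo3Triple (Ψ (coordFrame R a)) y z := by
  by_cases ha : Function.Injective a
  · obtain ⟨s, hs⟩ := Equiv.Perm.exists_extending_pair (Fin.succ ∘ Fin.castSucc) a
      ((Fin.succ_injective _).comp (Fin.castSucc_injective _)) ha
    have init_eq : Fin.init (coordFrame R (s ∘ Fin.succ)) = coordFrame R a :=
      funext fun r ↦ congrArg (fun k ↦ Pi.single k (1 : R)) (hs r)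
    exact ⟨_, _, init_eq ▸ hΨ.isSo3Triple (hω.apply_update_coordFrame s) 0⟩
  · refine ⟨0, 0, ?_⟩
    have image_eq_zero : Ψ (coordFrame R a) = 0 :=
      Ψ.map_eq_zero_of_not_injective _ fun h ↦ ha h.of_comp
    rw [image_eq_zero]
    constructor <;> simp

theorem isSo3CasimirFamily (hω : IsVectorProduct ω) (hΨ : RespectsBasicBracket ω Ψ)
    (hspan : Submodule.span R (Set.range Ψ) = ⊤) :
    IsSo3CasimirFamily R fun a : Fin (p + 1) → Fin (p + 3) ↦ Ψ (coordFrame R a) where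
  span_range := by
    rw [← hspan, ← span_range_coordFrame]
  lie_sum_tmul_self y := by
    induction hspan.ge (Submodule.mem_top (x := y)) using Submodule.span_induction with
    | mem _ h => obtain ⟨u, rfl⟩ := h; exact hΨ.lie_sum_tmul_self hω u
    | zero => exact zero_lie _
    | add y z _ _ hy hz => rw [add_lie, hy, hz, add_zero]
    | smul c y _ hy => rw [smul_lie, hy, smul_zero]
  exists_isSo3Triple := hΨ.exists_isSo3Triple hω

end VectorProduct

end RespectsBasicBracket

theorem stmt_15_general {K M : Type*} [Field K] [CharZero K] [AddCommGroup M] [Module K M]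
    [FiniteDimensional K M] {p : ℕ}
    {ω : (Fin (p + 3) → K) [⋀^Fin (p + 2)]→ₗ[K] (Fin (p + 3) → K)} (hω : IsVectorProduct ω)
    {ρ : (Fin (p + 3) → K) [⋀^Fin (p + 1)]→ₗ[K] End K M} (hρ : RespectsBasicBracket ω ρ)
    {N : Submodule K M} (hN : ∀ u, ∀ x ∈ N, ρ u x ∈ N) :
    ∃ S : Submodule K M, (∀ u, ∀ x ∈ S, ρ u x ∈ S) ∧ IsCompl N S := by
  have casimirFamily := hρ.respectsBasicBracket_rangeRestrict.isSo3CasimirFamily hω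
    hρ.span_range_rangeRestrict
  have := casimirFamily.complementedLattice (V := M)
  exact hρ.exists_invariant_isCompl hN

end

/-- Every finite-dimensional `n`-Lie module over the vector products
`n`-Lie algebra `V_n` over `ℂ` (`n = p + 2 ≥ 2`, `V_n = Fin (p+3) → ℂ` with the cross
product bracket `ω` determined by `[e_0,…,ê_i,…,e_{n+1}] = (-1)^{i+1} • e_i`) is completely
reducible.  An `n`-Lie module is a module over the basic Lie algebra `L(V_n)` — the
representation `ρ` on decomposable wedges respects the Lie bracket of `L(V_n)` (`hrep`) —
on which the quadratic relations hold (`hmod`); complete reducibility is phrased as: every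
invariant subspace has an invariant complement. -/
theorem stmt_15 {M : Type*} [AddCommGroup M] [Module ℂ M] [FiniteDimensional ℂ M]
    (p : ℕ)
    (ω : (Fin (p + 3) → ℂ) [⋀^Fin (p + 2)]→ₗ[ℂ] (Fin (p + 3) → ℂ))
    (hbasis : ∀ i : Fin (p + 3),
      ω (fun r => (Pi.single (i.succAbove r) (1 : ℂ) : Fin (p + 3) → ℂ)) =
        ((-1 : ℂ) ^ ((i : ℕ) + 1)) • (Pi.single i (1 : ℂ) : Fin (p + 3) → ℂ))
    (ρ : (Fin (p + 3) → ℂ) [⋀^Fin (p + 1)]→ₗ[ℂ] Module.End ℂ M)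
    (hrep : ∀ a b : Fin (p + 1) → (Fin (p + 3) → ℂ),
      ⁅ρ a, ρ b⁆ =
        ∑ i : Fin (p + 1), ((-1 : ℂ) ^ (i : ℕ)) •
          ρ (Fin.cons (ω (Fin.snoc a (b i))) (fun r => b (i.succAbove r))))
    (hmod : ∀ (a : Fin (p + 2) → (Fin (p + 3) → ℂ)) (c : Fin p → (Fin (p + 3) → ℂ)),
      ρ (Fin.cons (ω a) c) =
        ∑ i : Fin (p + 2), ((-1 : ℂ) ^ ((i : ℕ) + p + 1)) •
          (ρ (fun r => a (i.succAbove r)) * ρ (Fin.cons (a i) c))) :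
    ∀ N : Submodule ℂ M,
      (∀ u : Fin (p + 1) → (Fin (p + 3) → ℂ), ∀ x ∈ N, ρ u x ∈ N) →
      ∃ S : Submodule ℂ M,
        (∀ u : Fin (p + 1) → (Fin (p + 3) → ℂ), ∀ x ∈ S, ρ u x ∈ S) ∧ IsCompl N S := by
  exact fun _ hN ↦ stmt_15_general hbasis hrep hN
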